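/- Let n ≥ m ≥ 2, let r ∈ uR^X_{m,n} be a ranker starting with an X-letter, and let r' = X_c be a single-letter ranker. Let u, v ∈ A* be such that r is condensed on both u and v, r' is defined on both u and v, and u ⊳_{m,n+1} v. Then ord(r(u), r'(u)) = ord(r(v), r'(v)). Dually, if r ∈ uR^Y_{m,n} starts with a Y-letter, r' = Y_c is defined on u and v, r is condensed on u and v, and u ⊲_{m,n+1} v, then ord(r(u), r'(u)) = ord(r(v), r'(v)). -/

import Mathlib

namespace RankerPaper

variable {A : Type*} [DecidableEq A]

/-- Letters of rankers: `X a` ("next `a` to the right") and `Y a` ("next `a` to the left"). -/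
inductive RLetter (A : Type*) where
  | X : A → RLetter A
  | Y : A → RLetter A
  deriving DecidableEq

/-- Least `a`-position of `u` strictly greater than `q` (positions are 1-indexed). -/
def nextOcc (u : List A) (a : A) (q : ℕ) : Option ℕ :=
  ((List.range (u.length + 2)).filter (fun i => decide (q < i ∧ u[i-1]? = some a))).head?

/-- Greatest `a`-position of `u` strictly less than `q` (positions are 1-indexed). -/
def prevOcc (u : List A) (a : A) (q : ℕ) : Option ℕ :=
  ((List.range (u.length + 2)).filter
    (fun i => decide (1 ≤ i ∧ i < q ∧ u[i-1]? = some a))).getLast?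

/-- One evaluation step of a ranker letter from position `q`. -/
def stepR (u : List A) : RLetter A → ℕ → Option ℕ
  | .X a, q => nextOcc u a q
  | .Y a, q => prevOcc u a q

/-- Evaluation of a ranker from position `q`, processing letters left to right. -/
def evalFrom (u : List A) : List (RLetter A) → ℕ → Option ℕ
  | [], q => some q
  | z :: r, q => (stepR u z q).bind (evalFrom u r)

/-- Starting position: `0` for an `X`-letter, `|u|+1` for a `Y`-letter. -/
def startPos (u : List A) : RLetter A → ℕ
  | .X _ => 0
  | .Y _ => u.length + 1

/-- The position `r(u)` defined by the ranker `r` on `u` (`none` if undefined;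
empty rankers are considered undefined, rankers being nonempty words). -/
def evalR (u : List A) (r : List (RLetter A)) : Option ℕ :=
  match r with
  | [] => none
  | z :: t => evalFrom u (z :: t) (startPos u z)

/-- `r` is defined on `u`. -/
def Defined (u : List A) (r : List (RLetter A)) : Prop := (evalR u r).isSome

/-- The position `r(u)` (defaulting to `0` when undefined). -/
def pos (u : List A) (r : List (RLetter A)) : ℕ := (evalR u r).getD 0

/-- Do two ranker letters have the same direction? -/
def sameDir : RLetter A → RLetter A → Bool
  | .X _, .X _ => true
  | .Y _, .Y _ => true
  | _, _ => false

/-- Number of (alternating) blocks of a ranker. -/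
def numBlocks : List (RLetter A) → ℕ
  | [] => 0
  | [_] => 1
  | z :: w :: t => (if sameDir z w then 0 else 1) + numBlocks (w :: t)

def startsX (r : List (RLetter A)) : Prop := ∃ a t, r = RLetter.X a :: t
def startsY (r : List (RLetter A)) : Prop := ∃ a t, r = RLetter.Y a :: t
def endsX (r : List (RLetter A)) : Prop := ∃ a, r.getLast? = some (RLetter.X a)
def endsY (r : List (RLetter A)) : Prop := ∃ a, r.getLast? = some (RLetter.Y a)

/-- `R^X_{m,n}`: rankers with exactly `m` blocks, depth `n`, starting with an `X`-block. -/
def RX (m n : ℕ) (r : List (RLetter A)) : Prop :=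
  numBlocks r = m ∧ r.length = n ∧ startsX r

/-- `R^Y_{m,n}`: rankers with exactly `m` blocks, depth `n`, starting with a `Y`-block. -/
def RY (m n : ℕ) (r : List (RLetter A)) : Prop :=
  numBlocks r = m ∧ r.length = n ∧ startsY r

/-- `uR^X_{m,n}`. -/
def uRX (m n : ℕ) (r : List (RLetter A)) : Prop :=
  (∃ m' n', m' ≤ m ∧ n' ≤ n ∧ RX m' n' r) ∨ (∃ m' n', m' < m ∧ n' < n ∧ RY m' n' r)

/-- `uR^Y_{m,n}`. -/
def uRY (m n : ℕ) (r : List (RLetter A)) : Prop :=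
  (∃ m' n', m' ≤ m ∧ n' ≤ n ∧ RY m' n' r) ∨ (∃ m' n', m' < m ∧ n' < n ∧ RX m' n' r)

/-- `uR_{m,n} = uR^X_{m,n} ∪ uR^Y_{m,n}`. -/
def uR (m n : ℕ) (r : List (RLetter A)) : Prop := uRX m n r ∨ uRY m n r

/-- `uR^X_m = ∪_{n ≥ m} uR^X_{m,n}`. -/
def uRXm (m : ℕ) (r : List (RLetter A)) : Prop := ∃ n, m ≤ n ∧ uRX m n r

/-- `uR^Y_m = ∪_{n ≥ m} uR^Y_{m,n}`. -/
def uRYm (m : ℕ) (r : List (RLetter A)) : Prop := ∃ n, m ≤ n ∧ uRY m n r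

/-- `r = Z₁ ⋯ Z_n` is condensed on `u`: it is defined on `u` and there is a chain of
open intervals `(0;|u|+1) = (i₀;j₀) ⊃ (i₁;j₁) ⊃ ⋯ ⊃ (i_{n-1};j_{n-1}) ∋ r(u)`
updated according to the pairs `Z_ℓ Z_{ℓ+1}`. -/
def Condensed (u : List A) (r : List (RLetter A)) : Prop :=
  ∃ (p : ℕ) (i j : ℕ → ℕ),
    evalR u r = some p ∧
    i 0 = 0 ∧ j 0 = u.length + 1 ∧
    (∀ ℓ a b, 1 ≤ ℓ → r[ℓ-1]? = some (RLetter.X a) → r[ℓ]? = some (RLetter.X b) →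
        nextOcc u a (i (ℓ-1)) = some (i ℓ) ∧ j ℓ = j (ℓ-1)) ∧
    (∀ ℓ a b, 1 ≤ ℓ → r[ℓ-1]? = some (RLetter.Y a) → r[ℓ]? = some (RLetter.Y b) →
        i ℓ = i (ℓ-1) ∧ prevOcc u a (j (ℓ-1)) = some (j ℓ)) ∧
    (∀ ℓ a b, 1 ≤ ℓ → r[ℓ-1]? = some (RLetter.X a) → r[ℓ]? = some (RLetter.Y b) →
        i ℓ = i (ℓ-1) ∧ nextOcc u a (i (ℓ-1)) = some (j ℓ)) ∧
    (∀ ℓ a b, 1 ≤ ℓ → r[ℓ-1]? = some (RLetter.Y a) → r[ℓ]? = some (RLetter.X b) →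
        prevOcc u a (j (ℓ-1)) = some (i ℓ) ∧ j ℓ = j (ℓ-1)) ∧
    (∀ ℓ, 1 ≤ ℓ → ℓ < r.length →
        i (ℓ-1) ≤ i ℓ ∧ j ℓ ≤ j (ℓ-1) ∧ (i (ℓ-1) < i ℓ ∨ j ℓ < j (ℓ-1))) ∧
    i (r.length - 1) < p ∧ p < j (r.length - 1)

/-- `u` and `v` agree on rankers from the set `R`. -/
def AgreeDef (R : List (RLetter A) → Prop) (u v : List A) : Prop :=
  ∀ r, R r → (Defined u r ↔ Defined v r)

/-- `u` and `v` agree on condensed rankers from the set `R`. -/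
def AgreeCond (R : List (RLetter A) → Prop) (u v : List A) : Prop :=
  ∀ r, R r → (Condensed u r ↔ Condensed v r)

/-- `u ⊳_{m,n} v`. -/
def trir (m n : ℕ) (u v : List A) : Prop := AgreeCond (uRX m n) u v

/-- `u ⊲_{m,n} v`. -/
def tril (m n : ℕ) (u v : List A) : Prop := AgreeCond (uRY m n) u v

/-- The alphabet (set of letters) of a word. -/
def alph (u : List A) : Finset A := u.toFinset

/-- Condition (WI 1). -/
def WI1 (m n : ℕ) (u v : List A) : Prop := AgreeDef (uR m n) u v

/-- Condition (WI 2). -/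
def WI2 (m n : ℕ) (u v : List A) : Prop :=
  ∀ r r', uR m n r → uR (m-1) (n-1) r' →
    Defined u r → Defined v r → Defined u r' → Defined v r' →
    compare (pos u r) (pos u r') = compare (pos v r) (pos v r')

/-- Condition (WI 3). -/
def WI3 (m n : ℕ) (u v : List A) : Prop :=
  ∀ r r', uR m n r → uR m (n-1) r' →
    ((endsX r ∧ endsY r') ∨ (endsY r ∧ endsX r')) →
    Defined u r → Defined v r → Defined u r' → Defined v r' →
    compare (pos u r) (pos u r') = compare (pos v r) (pos v r')

/-- Condition (WI 1c). -/
def WI1c (m n : ℕ) (u v : List A) : Prop := AgreeCond (uR m n) u v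

/-- Condition (WI 2c). -/
def WI2c (m n : ℕ) (u v : List A) : Prop :=
  ∀ r r', uR m n r → uR (m-1) (n-1) r' →
    Condensed u r → Condensed v r → Condensed u r' → Condensed v r' →
    compare (pos u r) (pos u r') = compare (pos v r) (pos v r')

/-- Condition (WI 3c). -/
def WI3c (m n : ℕ) (u v : List A) : Prop :=
  ∀ r r', uR m n r → uR m (n-1) r' →
    ((endsX r ∧ endsY r') ∨ (endsY r ∧ endsX r')) →
    Condensed u r → Condensed v r → Condensed u r' → Condensed v r' →
    compare (pos u r) (pos u r') = compare (pos v r) (pos v r')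

/-!
Reading a condensed ranker letter by letter moves a cursor, which consists of a position and an
open interval to which the search for it was confined. Let `f` be the first `c`-position of the
word. By induction on the ranker, the order types of the position and of both interval ends
relative to `f` agree on `u` and `v`; only the newly found position `p` needs an argument.

If `f` lies to the right of the left end of the interval, the ranker can be continued by `Y_c`
exactly when `f < p`. This takes one more letter, whence the depth `n + 1`. The bound on the
number of blocks is respected if `p` was found by a `Y`-letter, and also within the first
`X`-block, since `m ≥ 2`.

It may be exceeded if `p` was found by the last letter of a ranker `l Y_b X_{a₁} ⋯ X_{a_k} X_d`.
The case to consider is that `f` lies between the previous position and the right end of the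
interval. That right end is the position reached by `l`, so the `Y_b`-step from `f` leads to the
same position as the one after `l`, and `X_c Y_b X_{a₁} ⋯ X_{a_k} X_d` is condensed exactly when
`p < f`. This ranker has no more letters and no more blocks than the given one.

The statement for `Y` follows by reversing words.
-/

/-! ### Order types -/

theorem compare_eq_compare_iff {α β : Type*} [LinearOrder α] [LinearOrder β] {a b : α} {c d : β} :
    compare a b = compare c d ↔ (a < b ↔ c < d) ∧ (b < a ↔ d < c) := by
  rw [← compare_lt_iff_lt (a := a), ← compare_gt_iff_gt (a := a), ← compare_lt_iff_lt (a := c),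
    ← compare_gt_iff_gt (a := c)]
  cases compare a b <;> cases compare c d <;> decide

theorem compare_tsub_tsub {N a b : ℕ} (ha : a ≤ N) (hb : b ≤ N) :
    compare (N - a) (N - b) = compare b a := by
  rw [compare_eq_compare_iff]
  omega

/-! ### Blocks and mirror images of rankers -/

section Blocks

variable {B : Type*}

theorem numBlocks_pos (z : RLetter B) (r : List (RLetter B)) : 0 < numBlocks (z :: r) := by
  induction r generalizing z with
  | nil => exact Nat.one_pos
  | cons w r ih => exact (ih w).trans_le (Nat.le_add_left _ _)

theorem numBlocks_le_append_left (l r : List (RLetter B)) :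
    numBlocks r ≤ numBlocks (l ++ r) := by
  induction l with
  | nil => exact le_rfl
  | cons z l ih =>
    refine ih.trans ?_
    rw [List.cons_append]
    cases l ++ r with
    | nil => exact Nat.zero_le _
    | cons w t => exact Nat.le_add_left _ _

theorem numBlocks_le_append_right (l r : List (RLetter B)) :
    numBlocks l ≤ numBlocks (l ++ r) := by
  induction l with
  | nil => exact Nat.zero_le _
  | cons z l ih =>
    cases l with
    | nil => exact numBlocks_pos z r
    | cons w l => exact Nat.add_le_add_left ih _

theorem numBlocks_append_pair (r : List (RLetter B)) (z w : RLetter B) :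
    numBlocks (r ++ [z, w]) = numBlocks (r ++ [z]) + if sameDir z w then 0 else 1 := by
  induction r with
  | nil => simp only [List.nil_append, numBlocks, Nat.add_comm]
  | cons x r ih =>
    cases r with
    | nil => simp only [List.cons_append, List.nil_append, numBlocks]; omega
    | cons y r =>
      simp only [List.cons_append, numBlocks] at ih ⊢
      omega

theorem numBlocks_map_X_le_one (as : List B) : numBlocks (as.map RLetter.X) ≤ 1 := by
  induction as with
  | nil => exact Nat.zero_le _
  | cons a as ih =>
    cases as with
    | nil => exact le_rfl
    | cons b as => simpa only [List.map_cons, numBlocks, sameDir, if_true, zero_add] using ih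

theorem numBlocks_X_cons_Y_cons_le (a b c : B) (l r : List (RLetter B)) :
    numBlocks (.X c :: .Y b :: r) ≤ numBlocks (.X a :: l ++ .Y b :: r) := by
  induction l generalizing a with
  | nil => exact le_rfl
  | cons z l ih =>
    cases z with
    | X d => exact (ih d).trans (Nat.le_add_left _ _)
    | Y d => exact Nat.add_le_add_left (numBlocks_le_append_left (.Y d :: l) (.Y b :: r)) 1

theorem eq_map_X_or_eq_append_Y_cons_map_X (r : List (RLetter B)) :
    (∃ as : List B, r = as.map .X) ∨
      ∃ l b, ∃ as : List B, r = l ++ .Y b :: as.map .X := by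
  induction r using List.reverseRecOn with
  | nil => exact Or.inl ⟨[], rfl⟩
  | append_singleton r z ih =>
    cases z with
    | Y b => exact Or.inr ⟨r, b, [], rfl⟩
    | X a =>
      rcases ih with ⟨as, rfl⟩ | ⟨l, b, as, rfl⟩
      · exact Or.inl ⟨as ++ [a], by simp⟩
      · exact Or.inr ⟨l, b, as ++ [a], by simp⟩

/-- The ranker letter of the opposite direction: a ranker with all its letters swapped does on the
reversed word what the ranker does on the word. -/
def RLetter.swap : RLetter B → RLetter B
  | .X a => .Y a
  | .Y a => .X a

theorem RLetter.swap_swap (z : RLetter B) : z.swap.swap = z := by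
  cases z <;> rfl

theorem map_swap_map_swap (r : List (RLetter B)) :
    (r.map RLetter.swap).map RLetter.swap = r := by
  simp only [List.map_map, Function.comp_def, RLetter.swap_swap, List.map_id']

theorem numBlocks_map_swap (r : List (RLetter B)) :
    numBlocks (r.map RLetter.swap) = numBlocks r := by
  induction r with
  | nil => rfl
  | cons z r ih =>
    cases r with
    | nil => rfl
    | cons w r =>
      have sameDir_swap : sameDir z.swap w.swap = sameDir z w := by cases z <;> cases w <;> rfl
      simp only [List.map_cons, numBlocks, sameDir_swap] at ih ⊢
      rw [ih]

theorem uRX_iff_of_startsX {m n : ℕ} {r : List (RLetter B)} (hr : startsX r) :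
    uRX m n r ↔ numBlocks r ≤ m ∧ r.length ≤ n := by
  constructor
  · rintro (⟨_, _, hm, hn, rfl, rfl, -⟩ | ⟨_, _, -, -, -, -, b, t, rfl⟩)
    · exact ⟨hm, hn⟩
    · obtain ⟨a, _, h⟩ := hr
      cases h
  · exact fun ⟨hm, hn⟩ => Or.inl ⟨_, _, hm, hn, rfl, rfl, hr⟩

theorem startsX_map_swap {r : List (RLetter B)} (hr : startsY r) : startsX (r.map .swap) := by
  obtain ⟨a, t, rfl⟩ := hr
  exact ⟨a, t.map .swap, rfl⟩

theorem startsY_map_swap {r : List (RLetter B)} (hr : startsX r) : startsY (r.map .swap) := by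
  obtain ⟨a, t, rfl⟩ := hr
  exact ⟨a, t.map .swap, rfl⟩

theorem uRY_map_swap {m n : ℕ} {r : List (RLetter B)} (hr : uRX m n r) :
    uRY m n (r.map .swap) := by
  rcases hr with ⟨_, _, hm, hn, rfl, rfl, hr⟩ | ⟨_, _, hm, hn, rfl, rfl, hr⟩
  · exact Or.inl ⟨_, _, hm, hn, numBlocks_map_swap r, List.length_map _, startsY_map_swap hr⟩
  · exact Or.inr ⟨_, _, hm, hn, numBlocks_map_swap r, List.length_map _, startsX_map_swap hr⟩

theorem uRX_map_swap {m n : ℕ} {r : List (RLetter B)} (hr : uRY m n r) :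
    uRX m n (r.map .swap) := by
  rcases hr with ⟨_, _, hm, hn, rfl, rfl, hr⟩ | ⟨_, _, hm, hn, rfl, rfl, hr⟩
  · exact Or.inl ⟨_, _, hm, hn, numBlocks_map_swap r, List.length_map _, startsX_map_swap hr⟩
  · exact Or.inr ⟨_, _, hm, hn, numBlocks_map_swap r, List.length_map _, startsY_map_swap hr⟩

end Blocks

/-! ### Occurrences of a letter -/

section Occurrences

variable {B : Type*} {u : List B} {a b : B} {k : ℕ}

/-- `k` is an `a`-position of `u`. The lower bound is needed because `u[k - 1]?` is the first letter
of `u` also for `k = 0`. -/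
def IsOcc (u : List B) (a : B) (k : ℕ) : Prop :=
  1 ≤ k ∧ u[k - 1]? = some a

theorem IsOcc.le_length (h : IsOcc u a k) : k ≤ u.length := by
  have := (List.getElem?_eq_some_iff.1 h.2).1
  omega

theorem IsOcc.letter_eq (ha : IsOcc u a k) (hb : IsOcc u b k) : a = b :=
  Option.some.inj (ha.2.symm.trans hb.2)

theorem IsOcc.reverse (h : IsOcc u a k) : IsOcc u.reverse a (u.length + 1 - k) := by
  have hk := h.le_length
  refine ⟨by omega, ?_⟩
  rw [List.getElem?_reverse (by have := h.1; omega)]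
  rw [show u.length - 1 - (u.length + 1 - k - 1) = k - 1 by have := h.1; omega]
  exact h.2

theorem IsOcc.of_reverse (h : IsOcc u.reverse a k) : IsOcc u a (u.length + 1 - k) := by
  simpa only [List.reverse_reverse, List.length_reverse] using h.reverse

end Occurrences

theorem getLast?_filter_range_eq_some {p : ℕ → Bool} {n k : ℕ} :
    ((List.range n).filter p).getLast? = some k ↔ IsGreatest {i | i < n ∧ p i} k := by
  induction n with
  | zero => simp [IsGreatest]
  | succ n ih =>
    rw [List.range_succ, List.filter_append]
    cases hn : p n
    · have : {i | i < n + 1 ∧ p i} = {i | i < n ∧ p i} := by grind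
      rw [this, ← ih]
      simp [hn]
    · have : IsGreatest {i | i < n + 1 ∧ p i} n :=
        ⟨⟨n.lt_succ_self, hn⟩, fun i hi => Nat.le_of_lt_succ hi.1⟩
      have last_eq : ((List.range n).filter p ++ [n].filter p).getLast? = some n := by simp [hn]
      rw [last_eq, Option.some.injEq]
      exact ⟨fun h => h ▸ this, this.unique⟩

variable {u v : List A} {a c d : A} {z : RLetter A} {r : List (RLetter A)} {k p q : ℕ}

theorem nextOcc_eq_some_iff : nextOcc u a q = some p ↔ IsLeast {k | q < k ∧ IsOcc u a k} p := by
  simp only [nextOcc, List.head?_filter, List.find?_range_eq_some, List.mem_range,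
    decide_eq_true_eq, Bool.not_eq_true', decide_eq_false_iff_not]
  constructor
  · rintro ⟨⟨hq, ha⟩, -, hmin⟩
    refine ⟨⟨hq, by omega, ha⟩, fun k hk => ?_⟩
    by_contra hkp
    exact hmin k (not_le.1 hkp) ⟨hk.1, hk.2.2⟩
  · rintro ⟨⟨hq, hp⟩, hmin⟩
    have hlen := hp.le_length
    refine ⟨⟨hq, hp.2⟩, by omega, fun k hk hka => ?_⟩
    exact hk.not_ge (hmin ⟨hka.1, by omega, hka.2⟩)

theorem prevOcc_eq_some_iff : prevOcc u a q = some p ↔ IsGreatest {k | k < q ∧ IsOcc u a k} p := by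
  rw [prevOcc, getLast?_filter_range_eq_some]
  have : {i | i < u.length + 2 ∧ decide (1 ≤ i ∧ i < q ∧ u[i - 1]? = some a)} =
      {k | k < q ∧ IsOcc u a k} := by
    ext k
    simp only [decide_eq_true_eq, Set.mem_ofPred_eq]
    constructor
    · exact fun ⟨_, h1, hq, ha⟩ => ⟨hq, h1, ha⟩
    · exact fun ⟨hq, hk⟩ => ⟨by have := hk.le_length; omega, hk.1, hq, hk.2⟩
  rw [this]

theorem nextOcc_zero_eq_some_iff : nextOcc u a 0 = some p ↔ IsLeast {k | IsOcc u a k} p := by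
  have : {k | 0 < k ∧ IsOcc u a k} = {k | IsOcc u a k} :=
    Set.ext fun _ => and_iff_right_of_imp fun hk => hk.1
  rw [nextOcc_eq_some_iff, this]

theorem exists_prevOcc (hk : IsOcc u a k) (hkq : k < q) :
    ∃ p, prevOcc u a q = some p ∧ k ≤ p := by
  obtain ⟨p, hp, hmax⟩ := ((Set.finite_Iio q).subset
    (fun i (hi : i < q ∧ IsOcc u a i) => hi.1)).exists_maximal ⟨k, hkq, hk⟩
  have hp' : IsGreatest {i | i < q ∧ IsOcc u a i} p :=
    ⟨hp, fun i hi => (le_total i p).elim id (hmax hi)⟩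
  exact ⟨p, prevOcc_eq_some_iff.2 hp', hp'.2 ⟨hkq, hk⟩⟩

theorem prevOcc_eq_some_of_le (h : prevOcc u a q = some p) (hpk : p < k) (hkq : k ≤ q) :
    prevOcc u a k = some p := by
  rw [prevOcc_eq_some_iff] at h ⊢
  exact ⟨⟨hpk, h.1.2⟩, fun i hi => h.2 ⟨hi.1.trans_le hkq, hi.2⟩⟩

theorem prevOcc_zero (u : List A) (a : A) : prevOcc u a 0 = none :=
  Option.eq_none_iff_forall_not_mem.2 fun _ hp =>
    (Nat.not_lt_zero _ (prevOcc_eq_some_iff.1 hp).1.1)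

theorem prevOcc_reverse (hq : q ≤ u.length + 1) (h : nextOcc u a q = some p) :
    prevOcc u.reverse a (u.length + 1 - q) = some (u.length + 1 - p) := by
  rw [nextOcc_eq_some_iff] at h
  obtain ⟨⟨hqp, hp⟩, hmin⟩ := h
  have hlen := hp.le_length
  refine prevOcc_eq_some_iff.2 ⟨⟨by omega, hp.reverse⟩, fun k hk => ?_⟩
  have : p ≤ u.length + 1 - k := hmin ⟨by have := hk.1; omega, hk.2.of_reverse⟩
  omega

theorem nextOcc_reverse (hq : q ≤ u.length + 1) (h : prevOcc u a q = some p) :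
    nextOcc u.reverse a (u.length + 1 - q) = some (u.length + 1 - p) := by
  rw [prevOcc_eq_some_iff] at h
  obtain ⟨⟨hpq, hp⟩, hmax⟩ := h
  refine nextOcc_eq_some_iff.2 ⟨⟨by omega, hp.reverse⟩, fun k hk => ?_⟩
  have hk1 := hk.2.1
  have : u.length + 1 - k ≤ p := hmax ⟨by have := hk.1; omega, hk.2.of_reverse⟩
  omega

theorem stepR_reverse (hq : q ≤ u.length + 1) (h : stepR u z q = some p) :
    stepR u.reverse z.swap (u.length + 1 - q) = some (u.length + 1 - p) := by
  cases z with
  | X a => exact prevOcc_reverse hq h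
  | Y a => exact nextOcc_reverse hq h

/-! ### Condensed rankers as runs of a cursor -/

/-- The state reached after reading a prefix of a condensed ranker: the open interval `(lo; hi)` to
which the last letter read was confined, and the position `pos` it found there. -/
structure Cursor where
  lo : ℕ
  hi : ℕ
  pos : ℕ

/-- The open interval to which the next letter is confined, given as the pair of its endpoints: the
part of `(s.lo; s.hi)` on the side of `s.pos` to which that letter moves. -/
def Cursor.narrow {B : Type*} (s : Cursor) : RLetter B → ℕ × ℕ
  | .X _ => (s.pos, s.hi)
  | .Y _ => (s.lo, s.pos)

/-- Reads one ranker letter, failing if this leads outside the interval allotted to that letter. -/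
def Cursor.step (u : List A) (s : Cursor) (z : RLetter A) : Option Cursor :=
  (stepR u z s.pos).bind fun p =>
    if (s.narrow z).1 < p ∧ p < (s.narrow z).2 then some ⟨(s.narrow z).1, (s.narrow z).2, p⟩
    else none

/-- Reads a ranker letter by letter. By `condensed_cons_iff` this succeeds from the initial cursor
exactly when the ranker is condensed. -/
def Cursor.run (u : List A) (r : List (RLetter A)) (s : Cursor) : Option Cursor :=
  r.foldlM (Cursor.step u) s

/-- The interval spanning the whole word, with the start position `q`, which is `0` for rankers
starting with an `X`-letter and `|u| + 1` for those starting with a `Y`-letter. -/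
def Cursor.initial (u : List A) (q : ℕ) : Cursor :=
  ⟨0, u.length + 1, q⟩

variable {s t s' t' : Cursor}

theorem Cursor.step_eq_some_iff : s.step u z = some t ↔
    stepR u z s.pos = some t.pos ∧ s.narrow z = (t.lo, t.hi) ∧ t.lo < t.pos ∧ t.pos < t.hi := by
  obtain ⟨lo, hi, p⟩ := t
  simp only [step, Option.bind_eq_some_iff, Option.ite_none_right_eq_some, Option.some.injEq,
    Cursor.mk.injEq, Prod.ext_iff]
  constructor
  · rintro ⟨_, hp, hin, rfl, rfl, rfl⟩
    exact ⟨hp, ⟨rfl, rfl⟩, hin⟩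
  · rintro ⟨hp, ⟨rfl, rfl⟩, hin⟩
    exact ⟨p, hp, hin, rfl, rfl, rfl⟩

theorem Cursor.step_X_eq_some_iff : s.step u (.X a) = some t ↔
    nextOcc u a s.pos = some t.pos ∧ s.pos = t.lo ∧ s.hi = t.hi ∧ t.pos < t.hi := by
  simp only [step_eq_some_iff, narrow, Prod.mk.injEq, stepR]
  constructor
  · exact fun ⟨hp, ⟨hlo, hhi⟩, _, hlt⟩ => ⟨hp, hlo, hhi, hlt⟩
  · exact fun ⟨hp, hlo, hhi, hlt⟩ => ⟨hp, ⟨hlo, hhi⟩, hlo ▸ (nextOcc_eq_some_iff.1 hp).1.1, hlt⟩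

theorem Cursor.step_Y_eq_some_iff : s.step u (.Y a) = some t ↔
    prevOcc u a s.pos = some t.pos ∧ s.lo = t.lo ∧ s.pos = t.hi ∧ t.lo < t.pos := by
  simp only [step_eq_some_iff, narrow, Prod.mk.injEq, stepR]
  constructor
  · exact fun ⟨hp, ⟨hlo, hhi⟩, hlt, _⟩ => ⟨hp, hlo, hhi, hlt⟩
  · exact fun ⟨hp, hlo, hhi, hlt⟩ => ⟨hp, ⟨hlo, hhi⟩, hlt, hhi ▸ (prevOcc_eq_some_iff.1 hp).1.1⟩

theorem Cursor.run_cons_eq_some_iff :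
    run u (z :: r) s = some t ↔ ∃ s₁, s.step u z = some s₁ ∧ run u r s₁ = some t := by
  simp only [run, List.foldlM_cons, Option.bind_eq_bind, Option.bind_eq_some_iff]

theorem Cursor.run_append_eq_some_iff {l : List (RLetter A)} :
    run u (l ++ r) s = some t ↔ ∃ s₁, run u l s = some s₁ ∧ run u r s₁ = some t := by
  simp only [run, List.foldlM_append, Option.bind_eq_bind, Option.bind_eq_some_iff]

theorem Cursor.run_singleton (u : List A) (z : RLetter A) (s : Cursor) :
    run u [z] s = s.step u z := by
  simp only [run, List.foldlM_cons, List.foldlM_nil, bind_pure]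

theorem Cursor.evalFrom_of_run (h : run u r s = some t) : evalFrom u r s.pos = some t.pos := by
  induction r generalizing s with
  | nil =>
    obtain rfl := Option.some.inj h
    rfl
  | cons z r ih =>
    obtain ⟨s₁, hstep, hrun⟩ := run_cons_eq_some_iff.1 h
    rw [evalFrom, (step_eq_some_iff.1 hstep).1, Option.bind_some, ih hrun]

/-- The endpoint of the interval `I` from which the letter `z` searches. -/
def RLetter.source {B : Type*} : RLetter B → ℕ × ℕ → ℕ
  | .X _, I => I.1
  | .Y _, I => I.2

theorem RLetter.source_narrow {B : Type*} (z : RLetter B) (s : Cursor) :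
    z.source (s.narrow z) = s.pos := by
  cases z <;> rfl

/-- The open interval `J` follows `I` in the chain witnessing that a ranker with consecutive letters
`z` and `w` is condensed. -/
def IntervalLink (u : List A) (z w : RLetter A) (I J : ℕ × ℕ) : Prop :=
  (∃ q, stepR u z (z.source I) = some q ∧ Cursor.narrow ⟨I.1, I.2, q⟩ w = J) ∧
    I.1 ≤ J.1 ∧ J.2 ≤ I.2 ∧ (I.1 < J.1 ∨ J.2 < I.2)

/-- The chain of intervals `K 0 ⊃ K 1 ⊃ ⋯` from the definition of condensed rankers. -/
def IntervalChain (u : List A) (r : List (RLetter A)) (K : ℕ → ℕ × ℕ) : Prop :=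
  ∀ ℓ z w, r[ℓ]? = some z → r[ℓ + 1]? = some w → IntervalLink u z w (K ℓ) (K (ℓ + 1))

theorem intervalChain_singleton (u : List A) (z : RLetter A) (K : ℕ → ℕ × ℕ) :
    IntervalChain u [z] K := by
  intro ℓ _ _ _ h
  simp at h

theorem intervalChain_cons_cons {w : RLetter A} {K : ℕ → ℕ × ℕ} :
    IntervalChain u (z :: w :: r) K ↔
      IntervalLink u z w (K 0) (K 1) ∧ IntervalChain u (w :: r) (fun ℓ => K (ℓ + 1)) := by
  constructor
  · exact fun h => ⟨h 0 z w rfl rfl, fun ℓ => h (ℓ + 1)⟩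
  · rintro ⟨hlink, hchain⟩ (_ | ℓ) z' w' hz hw
    · obtain rfl := Option.some.inj hz
      obtain rfl := Option.some.inj hw
      exact hlink
    · exact hchain ℓ z' w' hz hw

theorem condensed_cons_iff_exists_intervalChain : Condensed u (z :: r) ↔
    ∃ p K, K 0 = (0, u.length + 1) ∧ evalFrom u (z :: r) (startPos u z) = some p ∧
      IntervalChain u (z :: r) K ∧ (K r.length).1 < p ∧ p < (K r.length).2 := by
  constructor
  · rintro ⟨p, i, j, hp, hi, hj, hXX, hYY, hXY, hYX, hnest, hlo, hhi⟩
    refine ⟨p, fun ℓ => (i ℓ, j ℓ), by simp only [hi, hj], hp, fun ℓ x w hx hw => ⟨?_, ?_⟩,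
      hlo, hhi⟩
    · cases x <;> cases w
      · obtain ⟨h₁, h₂⟩ := hXX (ℓ + 1) _ _ (Nat.le_add_left _ _) hx hw
        exact ⟨_, h₁, Prod.ext rfl h₂.symm⟩
      · obtain ⟨h₁, h₂⟩ := hXY (ℓ + 1) _ _ (Nat.le_add_left _ _) hx hw
        exact ⟨_, h₂, Prod.ext h₁.symm rfl⟩
      · obtain ⟨h₁, h₂⟩ := hYX (ℓ + 1) _ _ (Nat.le_add_left _ _) hx hw
        exact ⟨_, h₁, Prod.ext rfl h₂.symm⟩
      · obtain ⟨h₁, h₂⟩ := hYY (ℓ + 1) _ _ (Nat.le_add_left _ _) hx hw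
        exact ⟨_, h₂, Prod.ext h₁.symm rfl⟩
    · exact hnest (ℓ + 1) (Nat.le_add_left _ _) (List.getElem?_eq_some_iff.1 hw).1
  · rintro ⟨p, K, hK, hp, hchain, hlo, hhi⟩
    have link (ℓ : ℕ) (x w : RLetter A) (hℓ : 1 ≤ ℓ) (hx : (z :: r)[ℓ - 1]? = some x)
        (hw : (z :: r)[ℓ]? = some w) : IntervalLink u x w (K (ℓ - 1)) (K ℓ) := by
      obtain ⟨ℓ, rfl⟩ := Nat.exists_eq_add_of_le' hℓ
      exact hchain ℓ x w hx hw
    refine ⟨p, fun ℓ => (K ℓ).1, fun ℓ => (K ℓ).2, hp, congrArg Prod.fst hK, congrArg Prod.snd hK,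
      fun ℓ a b hℓ ha hb => ?_, fun ℓ a b hℓ ha hb => ?_, fun ℓ a b hℓ ha hb => ?_,
      fun ℓ a b hℓ ha hb => ?_, fun ℓ hℓ hlen => ?_, hlo, hhi⟩
    · obtain ⟨⟨q, hq, hK⟩, -⟩ := link ℓ _ _ hℓ ha hb
      exact ⟨hq.trans (congrArg some (congrArg Prod.fst hK)), (congrArg Prod.snd hK).symm⟩
    · obtain ⟨⟨q, hq, hK⟩, -⟩ := link ℓ _ _ hℓ ha hb
      exact ⟨(congrArg Prod.fst hK).symm, hq.trans (congrArg some (congrArg Prod.snd hK))⟩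
    · obtain ⟨⟨q, hq, hK⟩, -⟩ := link ℓ _ _ hℓ ha hb
      exact ⟨(congrArg Prod.fst hK).symm, hq.trans (congrArg some (congrArg Prod.snd hK))⟩
    · obtain ⟨⟨q, hq, hK⟩, -⟩ := link ℓ _ _ hℓ ha hb
      exact ⟨hq.trans (congrArg some (congrArg Prod.fst hK)), (congrArg Prod.snd hK).symm⟩
    · exact (link ℓ _ _ hℓ (List.getElem?_eq_getElem (by omega))
        (List.getElem?_eq_getElem hlen)).2

/-- In the definition of condensed rankers only the last position is required to lie in its
interval. For the earlier positions this follows from the strict nesting of the intervals, provided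
that the next interval is nonempty. -/
theorem lt_and_lt_of_narrow {w : RLetter A} {I : ℕ × ℕ}
    (hq : stepR u z (z.source I) = some q)
    (hlt : (Cursor.narrow ⟨I.1, I.2, q⟩ w).1 < (Cursor.narrow ⟨I.1, I.2, q⟩ w).2)
    (hnest : I.1 < (Cursor.narrow ⟨I.1, I.2, q⟩ w).1 ∨
      (Cursor.narrow ⟨I.1, I.2, q⟩ w).2 < I.2) :
    I.1 < q ∧ q < I.2 := by
  cases z with
  | X a =>
    have hlo : I.1 < q := (nextOcc_eq_some_iff.1 hq).1.1
    cases w with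
    | X b => exact ⟨hlo, hlt⟩
    | Y b => exact ⟨hlo, hnest.resolve_left (lt_irrefl _)⟩
  | Y a =>
    have hhi : q < I.2 := (prevOcc_eq_some_iff.1 hq).1.1
    cases w with
    | X b => exact ⟨hnest.resolve_right (lt_irrefl _), hhi⟩
    | Y b => exact ⟨hlt, hhi⟩

theorem Cursor.intervalLink_of_step {w : RLetter A} (h : s.step u z = some t) :
    IntervalLink u z w (s.narrow z) (t.narrow w) := by
  obtain ⟨hstep, hnarrow, hlo, hhi⟩ := step_eq_some_iff.1 h
  refine ⟨⟨t.pos, z.source_narrow s ▸ hstep, ?_⟩, ?_⟩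
  · rw [hnarrow]
  · rw [hnarrow]
    cases w with
    | X b => exact ⟨hlo.le, le_rfl, Or.inl hlo⟩
    | Y b => exact ⟨le_rfl, hhi.le, Or.inr hhi⟩

theorem Cursor.narrow_lt_of_step (h : s.step u z = some t) : (s.narrow z).1 < (s.narrow z).2 := by
  obtain ⟨-, hnarrow, hlo, hhi⟩ := step_eq_some_iff.1 h
  exact hnarrow ▸ hlo.trans hhi

theorem Cursor.isSome_run_cons_iff : (run u (z :: r) s).isSome ↔
    ∃ p K, K 0 = s.narrow z ∧ evalFrom u (z :: r) s.pos = some p ∧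
      IntervalChain u (z :: r) K ∧ (K r.length).1 < p ∧ p < (K r.length).2 := by
  rw [Option.isSome_iff_exists]
  constructor
  · rintro ⟨t, h⟩
    refine ⟨t.pos, ?_⟩
    simp only [evalFrom_of_run h, true_and]
    induction r generalizing z s with
    | nil =>
      rw [run_singleton] at h
      obtain ⟨-, hnarrow, hin⟩ := step_eq_some_iff.1 h
      exact ⟨fun _ => s.narrow z, rfl, intervalChain_singleton u z _, hnarrow ▸ hin⟩
    | cons w r ih =>
      obtain ⟨s₁, hstep, hrun⟩ := run_cons_eq_some_iff.1 h
      obtain ⟨K, hK, hchain, hin⟩ := ih hrun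
      have hlink : IntervalLink u z w (s.narrow z) (K 0) := hK ▸ intervalLink_of_step hstep
      exact ⟨fun ℓ => Nat.casesOn ℓ (s.narrow z) K, rfl,
        intervalChain_cons_cons.2 ⟨hlink, hchain⟩, hin⟩
  · rintro ⟨p, K, hK, hp, hchain, hin⟩
    induction r generalizing z s K with
    | nil =>
      rw [run_singleton]
      refine ⟨⟨(s.narrow z).1, (s.narrow z).2, p⟩, step_eq_some_iff.2 ⟨?_, rfl, hK ▸ hin⟩⟩
      simpa only [evalFrom, Option.bind_fun_some] using hp
    | cons w r ih =>
      obtain ⟨⟨⟨q, hq, hw⟩, -, -, hnest⟩, hchain⟩ := intervalChain_cons_cons.1 hchain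
      have hqs : stepR u z s.pos = some q := by rwa [hK, z.source_narrow] at hq
      rw [evalFrom, hqs, Option.bind_some] at hp
      obtain ⟨t, ht⟩ := ih (s := ⟨(K 0).1, (K 0).2, q⟩) _ hw.symm hp hchain hin
      obtain ⟨s₁, hstep, -⟩ := run_cons_eq_some_iff.1 ht
      have hin : (K 0).1 < q ∧ q < (K 0).2 :=
        lt_and_lt_of_narrow hq (narrow_lt_of_step hstep) (hw ▸ hnest)
      exact ⟨t, run_cons_eq_some_iff.2
        ⟨_, step_eq_some_iff.2 ⟨hqs, by rw [hK], hin⟩, ht⟩⟩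

theorem condensed_cons_iff :
    Condensed u (z :: r) ↔ (Cursor.run u (z :: r) (.initial u (startPos u z))).isSome := by
  have narrow_initial : (Cursor.initial u (startPos u z)).narrow z = (0, u.length + 1) := by
    cases z <;> rfl
  rw [condensed_cons_iff_exists_intervalChain, Cursor.isSome_run_cons_iff, narrow_initial]
  rfl

theorem pos_eq_of_run (h : Cursor.run u (z :: r) (.initial u (startPos u z)) = some t) :
    pos u (z :: r) = t.pos := by
  rw [pos, show evalR u (z :: r) = some t.pos from Cursor.evalFrom_of_run h, Option.getD_some]

/-! ### Reversal of words -/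

/-- The letter `a` of `X a` and of `Y a`. -/
def RLetter.letter {B : Type*} : RLetter B → B
  | .X a => a
  | .Y a => a

theorem isOcc_of_stepR (h : stepR u z q = some p) : IsOcc u z.letter p := by
  cases z with
  | X a => exact (nextOcc_eq_some_iff.1 h).1.2
  | Y a => exact (prevOcc_eq_some_iff.1 h).1.2

/-- The mirror image of a cursor on a word with `N - 1` letters. -/
def Cursor.reflect (N : ℕ) (s : Cursor) : Cursor :=
  ⟨N - s.hi, N - s.lo, N - s.pos⟩

theorem Cursor.step_reverse (hs : s.pos ≤ u.length + 1) (h : s.step u z = some t) :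
    (s.reflect (u.length + 1)).step u.reverse z.swap = some (t.reflect (u.length + 1)) := by
  obtain ⟨hstep, hnarrow, hlo, hhi⟩ := step_eq_some_iff.1 h
  have hlen := (isOcc_of_stepR hstep).le_length
  have narrow_reflect (N : ℕ) :
      (s.reflect N).narrow z.swap = (N - (s.narrow z).2, N - (s.narrow z).1) := by
    cases z <;> rfl
  refine step_eq_some_iff.2 ⟨stepR_reverse hs hstep, ?_, ?_, ?_⟩
  · rw [narrow_reflect, hnarrow]
    rfl
  all_goals simp only [reflect]; omega

theorem Cursor.run_reverse (hs : s.pos ≤ u.length + 1) (h : run u r s = some t) :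
    run u.reverse (r.map .swap) (s.reflect (u.length + 1)) = some (t.reflect (u.length + 1)) ∧
      t.pos ≤ u.length + 1 := by
  induction r generalizing s with
  | nil =>
    obtain rfl := Option.some.inj h
    exact ⟨rfl, hs⟩
  | cons z r ih =>
    obtain ⟨s₁, hstep, hrun⟩ := run_cons_eq_some_iff.1 h
    have hs₁ := (isOcc_of_stepR (step_eq_some_iff.1 hstep).1).le_length
    obtain ⟨hrun', ht⟩ := ih (by omega) hrun
    exact ⟨run_cons_eq_some_iff.2 ⟨_, step_reverse hs hstep, hrun'⟩, ht⟩

theorem Condensed.reverse (h : Condensed u r) :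
    Condensed u.reverse (r.map .swap) ∧
      pos u.reverse (r.map .swap) = u.length + 1 - pos u r ∧ pos u r ≤ u.length + 1 := by
  cases r with
  | nil =>
    obtain ⟨_, _, _, h, -⟩ := h
    cases h
  | cons z r =>
    obtain ⟨t, ht⟩ := Option.isSome_iff_exists.1 (condensed_cons_iff.1 h)
    have start_le : startPos u z ≤ u.length + 1 := by
      cases z
      exacts [Nat.zero_le _, le_rfl]
    have reflect_initial : (Cursor.initial u (startPos u z)).reflect (u.length + 1) =
        .initial u.reverse (startPos u.reverse z.swap) := by
      cases z <;> simp [Cursor.reflect, Cursor.initial, startPos, RLetter.swap]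
    obtain ⟨hrun, hle⟩ := Cursor.run_reverse start_le ht
    rw [reflect_initial] at hrun
    rw [pos_eq_of_run ht]
    exact ⟨condensed_cons_iff.2 (Option.isSome_iff_exists.2 ⟨_, hrun⟩), pos_eq_of_run hrun, hle⟩

theorem Condensed.defined (h : Condensed u r) : Defined u r := by
  obtain ⟨_, _, _, h, -⟩ := h
  exact Option.isSome_iff_exists.2 ⟨_, h⟩

theorem Defined.condensed_singleton (h : Defined u [z]) : Condensed u [z] := by
  obtain ⟨p, hp⟩ := Option.isSome_iff_exists.1 h
  have hocc : IsOcc u z.letter p :=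
    isOcc_of_stepR (by simpa only [evalR, evalFrom, Option.bind_fun_some] using hp)
  exact condensed_cons_iff_exists_intervalChain.2 ⟨p, fun _ => (0, u.length + 1), rfl, hp,
    intervalChain_singleton u z _, hocc.1, Nat.lt_succ_of_le hocc.le_length⟩

theorem trir_reverse_of_tril {m n : ℕ} (h : tril m n u v) : trir m n u.reverse v.reverse := by
  have condensed_reverse_iff {w : List A} {r : List (RLetter A)} :
      Condensed w.reverse r ↔ Condensed w (r.map .swap) := by
    constructor
    · exact fun hw => by simpa only [List.reverse_reverse] using hw.reverse.1
    · exact fun hw => by simpa only [map_swap_map_swap] using hw.reverse.1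
  intro r hr
  rw [condensed_reverse_iff, condensed_reverse_iff]
  exact h _ (uRY_map_swap hr)

/-! ### Comparison with the first occurrence of a letter -/

theorem Cursor.run_append_singleton_eq_some_iff :
    run u (r ++ [z]) s = some t ↔ ∃ s₁, run u r s = some s₁ ∧ s₁.step u z = some t := by
  simp only [run_append_eq_some_iff, run_singleton]

theorem Cursor.run_map_X {as : List A} (h : run u (as.map .X) s = some t) :
    t.hi = s.hi ∧ s.pos ≤ t.pos := by
  induction as generalizing s with
  | nil =>
    obtain rfl := Option.some.inj h
    exact ⟨rfl, le_rfl⟩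
  | cons a as ih =>
    obtain ⟨s₁, hstep, hrun⟩ := run_cons_eq_some_iff.1 h
    obtain ⟨hnext, -, hhi, -⟩ := step_X_eq_some_iff.1 hstep
    obtain ⟨hhi₁, hle⟩ := ih hrun
    exact ⟨hhi₁.trans hhi.symm, (nextOcc_eq_some_iff.1 hnext).1.1.le.trans hle⟩

/-- An `X`-block only depends on the start position, and the right end of the interval acts as a
bound on the positions visited. -/
theorem Cursor.isSome_run_map_X_iff {as : List A} (h : run u (as.map .X) s = some t)
    (hpos : s'.pos = s.pos) (hlt : s.pos < s'.hi) :
    (run u (as.map .X) s').isSome ↔ t.pos < s'.hi := by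
  induction as generalizing s s' with
  | nil =>
    obtain rfl := Option.some.inj h
    exact iff_of_true rfl hlt
  | cons a as ih =>
    obtain ⟨s₁, hstep, hrun⟩ := run_cons_eq_some_iff.1 h
    obtain ⟨hnext, -⟩ := step_X_eq_some_iff.1 hstep
    rw [List.map_cons, Option.isSome_iff_exists]
    simp only [run_cons_eq_some_iff]
    constructor
    · rintro ⟨t', s₁', hstep', hrun'⟩
      obtain ⟨hnext', -, hhi', hlt'⟩ := step_X_eq_some_iff.1 hstep'
      have hpos₁ : s₁'.pos = s₁.pos := Option.some.inj (hnext'.symm.trans (hpos ▸ hnext))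
      rw [hhi']
      exact (ih hrun hpos₁ (hpos₁ ▸ hlt')).1 (Option.isSome_iff_exists.2 ⟨t', hrun'⟩)
    · intro hthi
      have hlt₁ : s₁.pos < s'.hi := (run_map_X hrun).2.trans_lt hthi
      obtain ⟨t', hrun'⟩ := Option.isSome_iff_exists.1
        ((ih (s' := ⟨s'.pos, s'.hi, s₁.pos⟩) hrun rfl hlt₁).2 hthi)
      exact ⟨t', ⟨s'.pos, s'.hi, s₁.pos⟩,
        step_X_eq_some_iff.2 ⟨hpos ▸ hnext, rfl, rfl, hlt₁⟩, hrun'⟩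

theorem Cursor.run_Y_cons_initial_zero (u : List A) (a : A) (r : List (RLetter A)) :
    run u (.Y a :: r) (initial u 0) = none := by
  refine Option.eq_none_iff_forall_ne_some.2 fun t ht => ?_
  obtain ⟨s, hstep, -⟩ := run_cons_eq_some_iff.1 ht
  obtain ⟨hprev, -⟩ := step_Y_eq_some_iff.1 hstep
  exact Option.some_ne_none _ (hprev.symm.trans (prevOcc_zero u a))

theorem isSome_run_iff_of_trir {m n : ℕ} (h : trir m n u v) (hblocks : numBlocks r ≤ m)
    (hlen : r.length ≤ n) :
    (Cursor.run u r (.initial u 0)).isSome ↔ (Cursor.run v r (.initial v 0)).isSome := by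
  cases r with
  | nil => rfl
  | cons z r =>
    cases z with
    | X a =>
      have := h (.X a :: r) ((uRX_iff_of_startsX ⟨a, r, rfl⟩).2 ⟨hblocks, hlen⟩)
      rwa [condensed_cons_iff, condensed_cons_iff] at this
    | Y a =>
      rw [Cursor.run_Y_cons_initial_zero, Cursor.run_Y_cons_initial_zero]

variable {f f' : ℕ}

theorem Cursor.isSome_step_Y_iff (hf : IsLeast {k | IsOcc u c k} f) (hlo : s.lo < f) :
    (s.step u (.Y c)).isSome ↔ f < s.pos := by
  rw [Option.isSome_iff_exists]
  constructor
  · rintro ⟨t, ht⟩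
    obtain ⟨hprev, -⟩ := step_Y_eq_some_iff.1 ht
    obtain ⟨⟨hlt, hocc⟩, -⟩ := prevOcc_eq_some_iff.1 hprev
    exact (hf.2 hocc).trans_lt hlt
  · intro hlt
    obtain ⟨p, hp, hfp⟩ := exists_prevOcc hf.1 hlt
    exact ⟨⟨s.lo, s.pos, p⟩, step_Y_eq_some_iff.2 ⟨hp, rfl, rfl, hlo.trans_le hfp⟩⟩

theorem compare_eq_of_isOcc {B : Type*} {u v : List B} {c d : B} {p p' f f' : ℕ}
    (hf : IsLeast {k | IsOcc u c k} f) (hf' : IsLeast {k | IsOcc v c k} f')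
    (hp : IsOcc u d p) (hp' : IsOcc v d p') (h : f < p ↔ f' < p') :
    compare p f = compare p' f' := by
  refine compare_eq_compare_iff.2 ⟨?_, h⟩
  by_cases hdc : d = c
  · subst hdc
    exact iff_of_false (hf.2 hp).not_gt (hf'.2 hp').not_gt
  · have hne : p ≠ f := fun e => hdc (hp.letter_eq (e ▸ hf.1))
    have hne' : p' ≠ f' := fun e => hdc (hp'.letter_eq (e ▸ hf'.1))
    omega

theorem compare_eq_of_nextOcc {q' p' : ℕ}
    (hf : IsLeast {k | IsOcc u c k} f) (hf' : IsLeast {k | IsOcc v c k} f')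
    (hq : q < f) (hq' : q' < f') (hp : nextOcc u d q = some p) (hp' : nextOcc v d q' = some p')
    (h : p < f ↔ p' < f') : compare p f = compare p' f' := by
  rw [nextOcc_eq_some_iff] at hp hp'
  refine compare_eq_compare_iff.2 ⟨h, ?_⟩
  by_cases hdc : d = c
  · subst hdc
    exact iff_of_false (hp.2 ⟨hq, hf.1⟩).not_gt (hp'.2 ⟨hq', hf'.1⟩).not_gt
  · have hne : p ≠ f := fun e => hdc (hp.1.2.letter_eq (e ▸ hf.1))
    have hne' : p' ≠ f' := fun e => hdc (hp'.1.2.letter_eq (e ▸ hf'.1))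
    omega

theorem Cursor.isSome_run_append_singleton_iff (h : run u r s = some t) :
    (run u (r ++ [z]) s).isSome ↔ (t.step u z).isSome := by
  simp only [Option.isSome_iff_exists, run_append_singleton_eq_some_iff, h, Option.some.injEq,
    exists_eq_left']

theorem compare_pos_eq_of_append_Y {m n : ℕ} (h : trir m n u v)
    (hf : IsLeast {k | IsOcc u c k} f) (hf' : IsLeast {k | IsOcc v c k} f')
    (hblocks : numBlocks (r ++ [z, .Y c]) ≤ m) (hlen : (r ++ [z, .Y c]).length ≤ n)
    (hs : Cursor.run u (r ++ [z]) (.initial u 0) = some s)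
    (hs' : Cursor.run v (r ++ [z]) (.initial v 0) = some s')
    (hlo : s.lo < f) (hlo' : s'.lo < f') : compare s.pos f = compare s'.pos f' := by
  have isOcc_pos {w : List A} {q : ℕ} {t : Cursor}
      (ht : Cursor.run w (r ++ [z]) (.initial w q) = some t) : IsOcc w z.letter t.pos := by
    obtain ⟨_, -, hstep⟩ := Cursor.run_append_singleton_eq_some_iff.1 ht
    exact isOcc_of_stepR (Cursor.step_eq_some_iff.1 hstep).1
  refine compare_eq_of_isOcc hf hf' (isOcc_pos hs) (isOcc_pos hs') ?_
  have := isSome_run_iff_of_trir h hblocks hlen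
  rwa [List.append_cons, Cursor.isSome_run_append_singleton_iff hs,
    Cursor.isSome_run_append_singleton_iff hs', Cursor.isSome_step_Y_iff hf hlo,
    Cursor.isSome_step_Y_iff hf' hlo'] at this

/-- If the first `c` lies between `s₀.pos` and `s₀.hi`, the greatest `b`-position to its left is the
one found by the `Y b` of the original ranker. -/
theorem Cursor.isSome_run_X_cons_Y_cons_iff {l : List (RLetter A)} {b : A} {as : List A}
    {s₀ : Cursor} (hf : IsLeast {k | IsOcc u c k} f)
    (hs₀ : run u (l ++ .Y b :: as.map .X) (initial u k) = some s₀)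
    (hs : s₀.step u (.X d) = some s) (hlt : s₀.pos < f) (hhi : f < s₀.hi) :
    (run u (.X c :: .Y b :: (as ++ [d]).map .X) (initial u 0)).isSome ↔ s.pos < f := by
  obtain ⟨s₁, -, hrun⟩ := run_append_eq_some_iff.1 hs₀
  obtain ⟨s₂, hstep, hX⟩ := run_cons_eq_some_iff.1 hrun
  obtain ⟨hprev, -, hhi₂, -⟩ := step_Y_eq_some_iff.1 hstep
  obtain ⟨hhi₀, hle⟩ := run_map_X hX
  have hprev' : prevOcc u b f = some s₂.pos :=
    prevOcc_eq_some_of_le hprev (hle.trans_lt hlt) (by omega)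
  have hstep_X : (initial u 0).step u (.X c) = some ⟨0, u.length + 1, f⟩ :=
    step_X_eq_some_iff.2
      ⟨nextOcc_zero_eq_some_iff.2 hf, rfl, rfl, Nat.lt_succ_of_le hf.1.le_length⟩
  have hstep_Y : Cursor.step u ⟨0, u.length + 1, f⟩ (.Y b) = some ⟨0, f, s₂.pos⟩ :=
    step_Y_eq_some_iff.2 ⟨hprev', rfl, rfl, (prevOcc_eq_some_iff.1 hprev).1.2.1⟩
  have hrun_X : run u ((as ++ [d]).map .X) s₂ = some s := by
    rw [List.map_append]
    exact run_append_singleton_eq_some_iff.2 ⟨s₀, hX, hs⟩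
  rw [← isSome_run_map_X_iff (s' := ⟨0, f, s₂.pos⟩) hrun_X rfl (hle.trans_lt hlt)]
  simp only [Option.isSome_iff_exists, run_cons_eq_some_iff, hstep_X, hstep_Y, Option.some.injEq,
    exists_eq_left']

/-- The cursors `s` and `s'` lie in the same way relative to `f` and `f'`, respectively; this is the
induction invariant, with `f` and `f'` the first occurrences of `c` in the two words. -/
structure SameOrder (f f' : ℕ) (s s' : Cursor) : Prop where
  lo : compare s.lo f = compare s'.lo f'
  hi : compare s.hi f = compare s'.hi f'
  pos : compare s.pos f = compare s'.pos f'

theorem compare_pos_eq_of_X_cons_Y_cons {m n : ℕ} {l : List (RLetter A)} {b : A} {as : List A}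
    (h : trir m n u v) (hf : IsLeast {k | IsOcc u c k} f) (hf' : IsLeast {k | IsOcc v c k} f')
    (hblocks : numBlocks (.X c :: .Y b :: (as ++ [d]).map .X) ≤ m) (hlen : as.length + 3 ≤ n)
    (hs : Cursor.run u (l ++ .Y b :: as.map .X) (.initial u 0) = some s)
    (hs' : Cursor.run v (l ++ .Y b :: as.map .X) (.initial v 0) = some s')
    (ht : s.step u (.X d) = some t) (ht' : s'.step v (.X d) = some t')
    (hlt : s.pos < f) (hlt' : s'.pos < f') (hhi : f < s.hi) (hhi' : f' < s'.hi) :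
    compare t.pos f = compare t'.pos f' := by
  refine compare_eq_of_nextOcc hf hf' hlt hlt' (Cursor.step_X_eq_some_iff.1 ht).1
    (Cursor.step_X_eq_some_iff.1 ht').1 ?_
  rw [← Cursor.isSome_run_X_cons_Y_cons_iff hf hs ht hlt hhi,
    ← Cursor.isSome_run_X_cons_Y_cons_iff hf' hs' ht' hlt' hhi']
  exact isSome_run_iff_of_trir h hblocks (by simpa only [List.length_cons, List.length_map,
    List.length_append, List.length_nil] using hlen)

theorem SameOrder.step_Y {m n : ℕ} (h : trir m (n + 1) u v) (ho : SameOrder f f' s s')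
    (hf : IsLeast {k | IsOcc u c k} f) (hf' : IsLeast {k | IsOcc v c k} f')
    (hblocks : numBlocks (r ++ [.Y d]) ≤ m) (hlen : r.length + 1 ≤ n)
    (hs : Cursor.run u r (.initial u 0) = some s) (hs' : Cursor.run v r (.initial v 0) = some s')
    (ht : s.step u (.Y d) = some t) (ht' : s'.step v (.Y d) = some t') :
    SameOrder f f' t t' := by
  obtain ⟨-, hlo, hhi, hlt⟩ := Cursor.step_Y_eq_some_iff.1 ht
  obtain ⟨-, hlo', hhi', hlt'⟩ := Cursor.step_Y_eq_some_iff.1 ht'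
  have ho_lo := compare_eq_compare_iff.1 ho.lo
  refine ⟨hlo ▸ hlo' ▸ ho.lo, hhi ▸ hhi' ▸ ho.pos, ?_⟩
  by_cases hf_lo : t.lo < f
  · have hblocks' : numBlocks (r ++ [.Y d, .Y c]) ≤ m := by
      rwa [numBlocks_append_pair]
    exact compare_pos_eq_of_append_Y h hf hf' hblocks' (by simpa using hlen)
      (Cursor.run_append_singleton_eq_some_iff.2 ⟨s, hs, ht⟩)
      (Cursor.run_append_singleton_eq_some_iff.2 ⟨s', hs', ht'⟩) hf_lo (by omega)
  · exact compare_eq_compare_iff.2 (by omega)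

theorem Cursor.exists_eq_X_cons_of_run_append {l : List (RLetter A)} {b : A}
    (h : run u (l ++ .Y b :: r) (initial u 0) = some s) : ∃ a l', l = .X a :: l' := by
  rcases l with _ | ⟨a | a, l⟩
  · exact absurd ((run_Y_cons_initial_zero u b r).symm.trans h) (Option.some_ne_none s).symm
  · exact ⟨a, l, rfl⟩
  · exact absurd ((run_Y_cons_initial_zero u a _).symm.trans h) (Option.some_ne_none s).symm

theorem SameOrder.step_X {m n : ℕ} (hm : 2 ≤ m) (h : trir m (n + 1) u v)
    (ho : SameOrder f f' s s')
    (hf : IsLeast {k | IsOcc u c k} f) (hf' : IsLeast {k | IsOcc v c k} f')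
    (hblocks : numBlocks (r ++ [.X d]) ≤ m) (hlen : r.length + 1 ≤ n)
    (hs : Cursor.run u r (.initial u 0) = some s) (hs' : Cursor.run v r (.initial v 0) = some s')
    (ht : s.step u (.X d) = some t) (ht' : s'.step v (.X d) = some t') :
    SameOrder f f' t t' := by
  obtain ⟨hnext, hlo, hhi, hlt⟩ := Cursor.step_X_eq_some_iff.1 ht
  obtain ⟨hnext', hlo', hhi', hlt'⟩ := Cursor.step_X_eq_some_iff.1 ht'
  have ho_hi := compare_eq_compare_iff.1 ho.hi
  have ho_pos := compare_eq_compare_iff.1 ho.pos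
  refine ⟨hlo ▸ hlo' ▸ ho.pos, hhi ▸ hhi' ▸ ho.hi, ?_⟩
  rcases le_or_gt f s.pos with hge | hlt_f
  · have := (nextOcc_eq_some_iff.1 hnext).1.1
    have := (nextOcc_eq_some_iff.1 hnext').1.1
    exact compare_eq_compare_iff.2 (by omega)
  rcases eq_map_X_or_eq_append_Y_cons_map_X r with ⟨as, rfl⟩ | ⟨l, b, as, rfl⟩
  · have hblocks' : numBlocks (as.map .X ++ [.X d, .Y c]) ≤ m := by
      have := numBlocks_map_X_le_one (as ++ [d])
      rw [List.map_append] at this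
      rw [numBlocks_append_pair]
      exact (Nat.add_le_add_right this 1).trans hm
    exact compare_pos_eq_of_append_Y h hf hf' hblocks' (by simpa using hlen)
      (Cursor.run_append_singleton_eq_some_iff.2 ⟨s, hs, ht⟩)
      (Cursor.run_append_singleton_eq_some_iff.2 ⟨s', hs', ht'⟩) (by omega) (by omega)
  rcases lt_or_ge f s.hi with hf_hi | hf_hi
  · obtain ⟨a, l, rfl⟩ := Cursor.exists_eq_X_cons_of_run_append hs
    have hblocks' : numBlocks (.X c :: .Y b :: (as ++ [d]).map .X) ≤ m := by
      refine (numBlocks_X_cons_Y_cons_le a b c l _).trans ?_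
      simpa only [List.map_append, List.append_assoc, List.cons_append, List.map_cons,
        List.map_nil] using hblocks
    refine compare_pos_eq_of_X_cons_Y_cons h hf hf' hblocks' ?_ hs hs' ht ht' hlt_f (by omega)
      hf_hi (by omega)
    simp only [List.length_append, List.length_cons, List.length_map] at hlen
    omega
  · exact compare_eq_compare_iff.2 (by omega)

theorem sameOrder_of_trir {m n : ℕ} (hm : 2 ≤ m) (h : trir m (n + 1) u v)
    (hf : IsLeast {k | IsOcc u c k} f) (hf' : IsLeast {k | IsOcc v c k} f')
    (hblocks : numBlocks r ≤ m) (hlen : r.length ≤ n)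
    (hs : Cursor.run u r (.initial u 0) = some s) (hs' : Cursor.run v r (.initial v 0) = some s') :
    SameOrder f f' s s' := by
  induction r using List.reverseRecOn generalizing s s' with
  | nil =>
    obtain rfl := Option.some.inj hs
    obtain rfl := Option.some.inj hs'
    have h₁ := hf.1.1
    have h₁' := hf'.1.1
    have hle := hf.1.le_length
    have hle' := hf'.1.le_length
    constructor <;> simp only [Cursor.initial] <;> exact compare_eq_compare_iff.2 (by omega)
  | append_singleton r z ih =>
    obtain ⟨s₁, hs₁, ht⟩ := Cursor.run_append_singleton_eq_some_iff.1 hs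
    obtain ⟨s₁', hs₁', ht'⟩ := Cursor.run_append_singleton_eq_some_iff.1 hs'
    have hlen' : r.length + 1 ≤ n := by rwa [List.length_append] at hlen
    have ho := ih ((numBlocks_le_append_right r [z]).trans hblocks) (by omega) hs₁ hs₁'
    cases z with
    | X d => exact ho.step_X hm h hf hf' hblocks hlen' hs₁ hs₁' ht ht'
    | Y d => exact ho.step_Y h hf hf' hblocks hlen' hs₁ hs₁' ht ht'

theorem Defined.isLeast_pos (h : Defined u [.X c]) :
    IsLeast {k | IsOcc u c k} (pos u [.X c]) := by
  obtain ⟨p, hp⟩ := Option.isSome_iff_exists.1 h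
  rw [pos, hp, Option.getD_some, ← nextOcc_zero_eq_some_iff]
  simpa only [evalR, evalFrom, Option.bind_fun_some, stepR, startPos] using hp

theorem compare_pos_eq_of_trir {m n : ℕ} (hm : 2 ≤ m) (hr : uRX m n r) (hX : startsX r)
    (hu : Condensed u r) (hv : Condensed v r) (hcu : Defined u [.X c]) (hcv : Defined v [.X c])
    (h : trir m (n + 1) u v) :
    compare (pos u r) (pos u [.X c]) = compare (pos v r) (pos v [.X c]) := by
  obtain ⟨hblocks, hlen⟩ := (uRX_iff_of_startsX hX).1 hr
  obtain ⟨a, r, rfl⟩ := hX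
  obtain ⟨s, hs⟩ := Option.isSome_iff_exists.1 (condensed_cons_iff.1 hu)
  obtain ⟨s', hs'⟩ := Option.isSome_iff_exists.1 (condensed_cons_iff.1 hv)
  rw [pos_eq_of_run hs, pos_eq_of_run hs']
  exact (sameOrder_of_trir hm h hcu.isLeast_pos hcv.isLeast_pos
    hblocks hlen hs hs').pos

theorem Condensed.compare_pos_reverse {r' : List (RLetter A)} (h : Condensed u r)
    (h' : Condensed u r') :
    compare (pos u.reverse (r.map .swap)) (pos u.reverse (r'.map .swap)) =
      compare (pos u r') (pos u r) := by
  obtain ⟨-, hpos, hle⟩ := h.reverse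
  obtain ⟨-, hpos', hle'⟩ := h'.reverse
  rw [hpos, hpos', compare_tsub_tsub hle hle']

/-- Order comparison of a condensed ranker against a single-letter
ranker of the same direction. -/
theorem statement13 (m n : ℕ) (hm : 2 ≤ m) (hmn : m ≤ n) (u v : List A) :
    (∀ (c : A) (r : List (RLetter A)),
       uRX m n r → startsX r →
       Condensed u r → Condensed v r →
       Defined u [RLetter.X c] → Defined v [RLetter.X c] →
       trir m (n+1) u v →
       compare (pos u r) (pos u [RLetter.X c]) =
         compare (pos v r) (pos v [RLetter.X c])) ∧
    (∀ (c : A) (r : List (RLetter A)),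
       uRY m n r → startsY r →
       Condensed u r → Condensed v r →
       Defined u [RLetter.Y c] → Defined v [RLetter.Y c] →
       tril m (n+1) u v →
       compare (pos u r) (pos u [RLetter.Y c]) =
         compare (pos v r) (pos v [RLetter.Y c])) := by
  refine ⟨fun c r hr hX hu hv hcu hcv h => compare_pos_eq_of_trir hm hr hX hu hv hcu hcv h,
    fun c r hr hY hu hv hcu hcv h => ?_⟩
  have hcu := hcu.condensed_singleton
  have hcv := hcv.condensed_singleton
  have reversed := compare_pos_eq_of_trir (c := c) hm (uRX_map_swap hr) (startsX_map_swap hY)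
    hu.reverse.1 hv.reverse.1 hcu.reverse.1.defined hcv.reverse.1.defined (trir_reverse_of_tril h)
  have flipped : compare (pos u [.Y c]) (pos u r) = compare (pos v [.Y c]) (pos v r) :=
    (hu.compare_pos_reverse hcu).symm.trans (reversed.trans (hv.compare_pos_reverse hcv))
  exact compare_eq_compare_iff.2 (compare_eq_compare_iff.1 flipped).symm

end RankerPaper
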